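/- Let X be an m×n complex matrix and let l = min(m, n). Then ‖S_X‖ ≤ 1 if and only if there exist an l×m complex matrix L and an l×n complex matrix R with ‖L‖_c ≤ 1, ‖R‖_c ≤ 1, and X = Lᴴ R. -/

import Mathlib

open Matrix BigOperators

/-- The ℓ²→ℓ² operator norm of a complex matrix. -/
noncomputable def opNorm {m n : ℕ} (A : Matrix (Fin m) (Fin n) ℂ) : ℝ :=
  ‖(Matrix.toEuclideanLin A).toContinuousLinearMap‖

/-- The column norm: the maximum Euclidean norm of a column. -/
noncomputable def colNorm {l m : ℕ} (L : Matrix (Fin l) (Fin m) ℂ) : ℝ :=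
  ⨆ j : Fin m, Real.sqrt (∑ i, ‖L i j‖ ^ 2)

/-- The Schur multiplier norm of `X` : the operator norm of `A ↦ X ∘ A` where the
matrices carry the ℓ²→ℓ² operator norm. -/
noncomputable def schurNorm {m n : ℕ} (X : Matrix (Fin m) (Fin n) ℂ) : ℝ :=
  ⨆ A : {A : Matrix (Fin m) (Fin n) ℂ // opNorm A ≤ 1}, opNorm (Matrix.hadamard X A.1)

lemma opNorm_le_iff' {m n : ℕ} (A : Matrix (Fin m) (Fin n) ℂ) (c : ℝ) (hc : 0 ≤ c)
    (h : ∀ v : Fin n → ℂ, ∑ i, ‖∑ j, A i j * v j‖ ^ 2 ≤ c ^ 2 * ∑ j, ‖v j‖ ^ 2) :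
    opNorm A ≤ c := by
  unfold opNorm
  refine ContinuousLinearMap.opNorm_le_bound _ hc fun v => ?_
  refine (sq_le_sq₀ (norm_nonneg _) (by positivity)).1 ?_
  have := h v.ofLp
  rw [mul_pow, EuclideanSpace.norm_sq_eq, EuclideanSpace.norm_sq_eq]
  simpa [Matrix.mulVec, dotProduct] using this

lemma opNorm_apply_le {m n : ℕ} (A : Matrix (Fin m) (Fin n) ℂ) (v : Fin n → ℂ) :
    ∑ i, ‖∑ j, A i j * v j‖ ^ 2 ≤ opNorm A ^ 2 * ∑ j, ‖v j‖ ^ 2 := by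
  have h := (Matrix.toEuclideanLin A).toContinuousLinearMap.le_opNorm (WithLp.toLp 2 v)
  have h2 := pow_le_pow_left₀ (norm_nonneg _) h 2
  rw [mul_pow, EuclideanSpace.norm_sq_eq, EuclideanSpace.norm_sq_eq] at h2
  unfold opNorm
  simpa [Matrix.mulVec, dotProduct] using h2

lemma opNorm_nonneg' {m n : ℕ} (A : Matrix (Fin m) (Fin n) ℂ) : 0 ≤ opNorm A := norm_nonneg _

lemma cs_sum {ι : Type*} [Fintype ι] (f g : ι → ℂ) :
    ‖∑ k, f k * g k‖ ^ 2 ≤ (∑ k, ‖f k‖ ^ 2) * ∑ k, ‖g k‖ ^ 2 := by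
  have h1 : ‖∑ k, f k * g k‖ ≤ ∑ k, ‖f k‖ * ‖g k‖ := by
    refine (norm_sum_le _ _).trans (le_of_eq ?_)
    simp
  exact (pow_le_pow_left₀ (norm_nonneg _) h1 2).trans (Finset.sum_mul_sq_le_sq_mul_sq _ _ _)

lemma hadamard_opNorm_le {m n k : ℕ} (L : Matrix (Fin k) (Fin m) ℂ) (R : Matrix (Fin k) (Fin n) ℂ)
    (A : Matrix (Fin m) (Fin n) ℂ) (b : ℝ) (hb : 0 ≤ b)
    (hL : ∀ i, ∑ t, ‖L t i‖ ^ 2 ≤ 1) (hR : ∀ j, ∑ t, ‖R t j‖ ^ 2 ≤ b ^ 2) :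
    opNorm (Matrix.hadamard (Lᴴ * R) A) ≤ b * opNorm A := by
  refine opNorm_le_iff' _ _ (mul_nonneg hb (opNorm_nonneg' A)) fun v => ?_
  have e : ∀ i, ∑ j, (Matrix.hadamard (Lᴴ * R) A) i j * v j
      = ∑ t, star (L t i) * ∑ j, A i j * (R t j * v j) := by
    intro i
    simp only [Matrix.hadamard_apply, Matrix.mul_apply, Matrix.conjTranspose_apply,
      Finset.sum_mul, Finset.mul_sum]
    rw [Finset.sum_comm]
    refine Finset.sum_congr rfl fun t _ => Finset.sum_congr rfl fun j _ => ?_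
    ring
  calc ∑ i, ‖∑ j, (Matrix.hadamard (Lᴴ * R) A) i j * v j‖ ^ 2
      ≤ ∑ i, ∑ t, ‖∑ j, A i j * (R t j * v j)‖ ^ 2 := by
        refine Finset.sum_le_sum fun i _ => ?_
        rw [e]
        refine (cs_sum _ _).trans ?_
        refine mul_le_of_le_one_left (by positivity) ?_
        simpa using hL i
    _ = ∑ t, ∑ i, ‖∑ j, A i j * (R t j * v j)‖ ^ 2 := Finset.sum_comm
    _ ≤ ∑ t, opNorm A ^ 2 * ∑ j, ‖R t j * v j‖ ^ 2 :=
        Finset.sum_le_sum fun t _ => opNorm_apply_le A (fun j => R t j * v j)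
    _ = opNorm A ^ 2 * ∑ j, (∑ t, ‖R t j‖ ^ 2) * ‖v j‖ ^ 2 := by
        rw [← Finset.mul_sum, Finset.sum_comm]
        simp [mul_pow, Finset.sum_mul]
    _ ≤ opNorm A ^ 2 * ∑ j, b ^ 2 * ‖v j‖ ^ 2 := by
        gcongr with j
        exact hR j
    _ = (b * opNorm A) ^ 2 * ∑ j, ‖v j‖ ^ 2 := by
        rw [← Finset.mul_sum]; ring

lemma colNorm_le_one_iff {l m : ℕ} (L : Matrix (Fin l) (Fin m) ℂ) :
    colNorm L ≤ 1 ↔ ∀ j, ∑ i, ‖L i j‖ ^ 2 ≤ 1 := by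
  unfold colNorm
  constructor
  · intro h j
    have h1 := (le_ciSup (f := fun j : Fin m => Real.sqrt (∑ i, ‖L i j‖ ^ 2))
      (Set.finite_range _).bddAbove j).trans h
    simpa using h1
  · intro h
    refine Real.iSup_le (fun j => ?_) zero_le_one
    simpa using h j

lemma schurNorm_bdd {m n : ℕ} (X : Matrix (Fin m) (Fin n) ℂ) :
    BddAbove (Set.range fun A : {A : Matrix (Fin m) (Fin n) ℂ // opNorm A ≤ 1} =>
      opNorm (Matrix.hadamard X A.1)) := by
  refine ⟨Real.sqrt (∑ j, ∑ t, ‖X t j‖ ^ 2), ?_⟩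
  rintro _ ⟨A, rfl⟩
  have h := hadamard_opNorm_le (1 : Matrix (Fin m) (Fin m) ℂ) X A.1
    (Real.sqrt (∑ j, ∑ t, ‖X t j‖ ^ 2)) (Real.sqrt_nonneg _) (fun i => by
      rw [Finset.sum_eq_single i] <;> simp +contextual) (fun j => by
      rw [Real.sq_sqrt (by positivity)]
      exact Finset.single_le_sum (f := fun j => ∑ t, ‖X t j‖ ^ 2)
        (fun _ _ => by positivity) (Finset.mem_univ j))
  simp only [Matrix.conjTranspose_one, Matrix.one_mul] at h
  exact h.trans (mul_le_of_le_one_right (Real.sqrt_nonneg _) A.2)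

lemma pad_factor {m n d l : ℕ} (hd : d ≤ l) (L : Matrix (Fin d) (Fin m) ℂ)
    (R : Matrix (Fin d) (Fin n) ℂ) (hL : ∀ i, ∑ t, ‖L t i‖ ^ 2 ≤ 1)
    (hR : ∀ j, ∑ t, ‖R t j‖ ^ 2 ≤ 1) :
    ∃ (L' : Matrix (Fin l) (Fin m) ℂ) (R' : Matrix (Fin l) (Fin n) ℂ),
      (∀ i, ∑ t, ‖L' t i‖ ^ 2 ≤ 1) ∧ (∀ j, ∑ t, ‖R' t j‖ ^ 2 ≤ 1) ∧ Lᴴ * R = L'ᴴ * R' := by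
  obtain ⟨c, rfl⟩ := Nat.exists_eq_add_of_le hd
  refine ⟨Matrix.of fun t i => Fin.addCases (fun t => L t i) (fun _ => 0) t,
    Matrix.of fun t i => Fin.addCases (fun t => R t i) (fun _ => 0) t, ?_, ?_, ?_⟩
  · intro i; simpa [Fin.sum_univ_add] using hL i
  · intro i; simpa [Fin.sum_univ_add] using hR i
  · ext i j; simp [Matrix.mul_apply, Fin.sum_univ_add]

lemma factor_of_subspace {m n l : ℕ} {E : Type*} [NormedAddCommGroup E] [InnerProductSpace ℂ E]
    [FiniteDimensional ℂ E] (x : Fin m → E) (y : Fin n → E) (hx : ∀ i, ‖x i‖ ^ 2 ≤ 1)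
    (hy : ∀ j, ‖y j‖ ^ 2 ≤ 1) (hl : Module.finrank ℂ E ≤ l) :
    ∃ (L : Matrix (Fin l) (Fin m) ℂ) (R : Matrix (Fin l) (Fin n) ℂ),
      (∀ i, ∑ t, ‖L t i‖ ^ 2 ≤ 1) ∧ (∀ j, ∑ t, ‖R t j‖ ^ 2 ≤ 1) ∧
      (Matrix.of fun i j => inner ℂ (x i) (y j)) = Lᴴ * R := by
  let b := stdOrthonormalBasis ℂ E
  obtain ⟨L, R, h1, h2, h3⟩ := pad_factor hl (Matrix.of fun t i => inner ℂ (b t) (x i))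
    (Matrix.of fun t i => inner ℂ (b t) (y i))
    (fun i => by simpa [b.sum_sq_norm_inner_right] using hx i)
    (fun i => by simpa [b.sum_sq_norm_inner_right] using hy i)
  refine ⟨L, R, h1, h2, ?_⟩
  rw [← h3]
  ext i j
  simp only [Matrix.of_apply, Matrix.mul_apply, Matrix.conjTranspose_apply]
  rw [← b.sum_inner_mul_inner]
  simp

lemma factor_min {m n : ℕ} {E : Type*} [NormedAddCommGroup E] [InnerProductSpace ℂ E]
    [FiniteDimensional ℂ E] (x : Fin m → E) (y : Fin n → E) (hx : ∀ i, ‖x i‖ ^ 2 ≤ 1)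
    (hy : ∀ j, ‖y j‖ ^ 2 ≤ 1) :
    ∃ (L : Matrix (Fin (min m n)) (Fin m) ℂ) (R : Matrix (Fin (min m n)) (Fin n) ℂ),
      (∀ i, ∑ t, ‖L t i‖ ^ 2 ≤ 1) ∧ (∀ j, ∑ t, ‖R t j‖ ^ 2 ≤ 1) ∧
      (Matrix.of fun i j => inner ℂ (x i) (y j)) = Lᴴ * R := by
  have key : ∀ W : Submodule ℂ E, Module.finrank ℂ W ≤ min m n →
      (∀ i j, inner ℂ (W.orthogonalProjectionOnto (x i)) (W.orthogonalProjectionOnto (y j))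
        = inner ℂ (x i) (y j)) → _ := fun W hW hi => by
    have := factor_of_subspace (fun i => W.orthogonalProjectionOnto (x i))
      (fun j => W.orthogonalProjectionOnto (y j))
      (fun i => (pow_le_pow_left₀ (norm_nonneg _)
        (W.norm_orthogonalProjectionOnto_apply_le _) 2).trans (hx i))
      (fun i => (pow_le_pow_left₀ (norm_nonneg _)
        (W.norm_orthogonalProjectionOnto_apply_le _) 2).trans (hy i)) hW
    simp only [hi] at this
    exact this
  rcases le_total m n with h | h
  · refine key (Submodule.span ℂ (Set.range x)) ?_ ?_
    · rw [min_eq_left h]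
      simpa [Set.finrank] using finrank_range_le_card (R := ℂ) x
    · intro i j
      have hm : x i ∈ Submodule.span ℂ (Set.range x) := Submodule.subset_span ⟨i, rfl⟩
      rw [Submodule.inner_orthogonalProjectionOnto_eq_of_mem_left,
        Submodule.coe_orthogonalProjectionOnto_apply, Submodule.starProjection_eq_self_iff.2 hm]
  · refine key (Submodule.span ℂ (Set.range y)) ?_ ?_
    · rw [min_eq_right h]
      simpa [Set.finrank] using finrank_range_le_card (R := ℂ) y
    · intro i j
      have hm : y j ∈ Submodule.span ℂ (Set.range y) := Submodule.subset_span ⟨j, rfl⟩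
      rw [Submodule.inner_orthogonalProjectionOnto_eq_of_mem_right,
        Submodule.coe_orthogonalProjectionOnto_apply, Submodule.starProjection_eq_self_iff.2 hm]

open scoped ComplexOrder MatrixOrder Matrix.Norms.L2Operator in
lemma exists_gram_add {ι : Type*} [Fintype ι] [DecidableEq ι] (B C : Matrix ι ι ℂ) :
    ∃ D : Matrix ι ι ℂ, Bᴴ * B + Cᴴ * C = Dᴴ * D := by
  have h : (0 : Matrix ι ι ℂ) ≤ Bᴴ * B + Cᴴ * C :=
    ((Matrix.posSemidef_conjTranspose_mul_self B).add
      (Matrix.posSemidef_conjTranspose_mul_self C)).nonneg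
  exact CStarAlgebra.nonneg_iff_eq_star_mul_self.1 h

lemma gram_diag {ι : Type*} [Fintype ι] (B : Matrix ι ι ℂ) (i : ι) :
    ∑ k, ‖B k i‖ ^ 2 = ((Bᴴ * B) i i).re := by
  simp only [Matrix.mul_apply, Matrix.conjTranspose_apply, Complex.re_sum]
  refine Finset.sum_congr rfl fun k _ => ?_
  rw [Complex.star_def, Complex.conj_mul']
  norm_cast

/-- The cone of pairs (off-diagonal block, diagonal bound) coming from Gram matrices. -/
def schurCone (m n : ℕ) : Set ((Fin m × Fin n → ℂ) × (Fin m ⊕ Fin n → ℂ)) :=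
  {p | ∃ B : Fin m ⊕ Fin n → Fin m ⊕ Fin n → ℂ,
    (∀ i j, ∑ k, star (B k (Sum.inl i)) * B k (Sum.inr j) = p.1 (i, j)) ∧
    ∀ i, ∑ k, ‖B k i‖ ^ 2 ≤ (p.2 i).re}

lemma schurCone_smul {m n : ℕ} {p} (hp : p ∈ schurCone m n) (t : ℝ) (ht : 0 ≤ t) :
    t • p ∈ schurCone m n := by
  obtain ⟨B, h1, h2⟩ := hp
  refine ⟨fun k i => (Real.sqrt t : ℂ) * B k i, fun i j => ?_, fun i => ?_⟩
  · have : ∀ k, star ((Real.sqrt t : ℂ) * B k (Sum.inl i)) * ((Real.sqrt t : ℂ) * B k (Sum.inr j))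
        = (t : ℂ) * (star (B k (Sum.inl i)) * B k (Sum.inr j)) := by
      intro k
      have hs : (Real.sqrt t : ℂ) * Real.sqrt t = t := by
        rw [← Complex.ofReal_mul, Real.mul_self_sqrt ht]
      rw [star_mul', Complex.star_def, Complex.conj_ofReal, ← hs]
      ring
    simp only [this, ← Finset.mul_sum, h1]
    simp
  · have : ∀ k, ‖(Real.sqrt t : ℂ) * B k i‖ ^ 2 = t * ‖B k i‖ ^ 2 := by
      intro k
      rw [norm_mul, mul_pow, Complex.norm_real, Real.norm_eq_abs, sq_abs, Real.sq_sqrt ht]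
    simp only [this, ← Finset.mul_sum]
    have := mul_le_mul_of_nonneg_left (h2 i) ht
    simpa using this

lemma schurCone_add {m n : ℕ} {p q} (hp : p ∈ schurCone m n) (hq : q ∈ schurCone m n) :
    p + q ∈ schurCone m n := by
  obtain ⟨B, h1, h2⟩ := hp
  obtain ⟨C, h3, h4⟩ := hq
  obtain ⟨D, hD⟩ := exists_gram_add (Matrix.of B) (Matrix.of C)
  refine ⟨D, fun i j => ?_, fun i => ?_⟩
  · have := congrFun (congrFun hD (Sum.inl i)) (Sum.inr j)
    simp only [Matrix.add_apply, Matrix.mul_apply, Matrix.conjTranspose_apply, Matrix.of_apply,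
      h1, h3] at this
    rw [← this]; rfl
  · have := h2 i
    have := h4 i
    have e1 := gram_diag (Matrix.of B) i
    have e2 := gram_diag (Matrix.of C) i
    rw [gram_diag, ← hD, Matrix.add_apply, Complex.add_re, ← e1, ← e2]
    simp only [Matrix.of_apply, Prod.snd_add, Pi.add_apply, Complex.add_re]
    linarith

lemma schurCone_convex (m n : ℕ) : Convex ℝ (schurCone m n) := by
  intro p hp q hq a b ha hb _
  exact schurCone_add (schurCone_smul hp a ha) (schurCone_smul hq b hb)

lemma schurCone_closed (m n : ℕ) : IsClosed (schurCone m n) := by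
  refine IsSeqClosed.isClosed fun u p hu hup => ?_
  choose B h1 h2 using hu
  obtain ⟨c, hc⟩ : ∃ c, ∀ k, ‖u k‖ ≤ c := by
    obtain ⟨c, hc⟩ := (Metric.isBounded_range_of_tendsto u hup).exists_norm_le
    exact ⟨c, fun k => hc _ ⟨k, rfl⟩⟩
  have hc0 : 0 ≤ c := (norm_nonneg _).trans (hc 0)
  have hB : ∀ k, B k ∈ Metric.closedBall (0 : Fin m ⊕ Fin n → Fin m ⊕ Fin n → ℂ) (Real.sqrt c) := by
    intro k
    rw [mem_closedBall_zero_iff, pi_norm_le_iff_of_nonneg (Real.sqrt_nonneg _)]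
    intro s
    rw [pi_norm_le_iff_of_nonneg (Real.sqrt_nonneg _)]
    intro i
    refine Real.le_sqrt_of_sq_le ?_
    calc ‖B k s i‖ ^ 2 ≤ ∑ s, ‖B k s i‖ ^ 2 :=
          Finset.single_le_sum (f := fun s => ‖B k s i‖ ^ 2) (fun _ _ => by positivity)
            (Finset.mem_univ s)
      _ ≤ ((u k).2 i).re := h2 k i
      _ ≤ ‖(u k).2 i‖ := Complex.re_le_norm _
      _ ≤ ‖(u k).2‖ := norm_le_pi_norm _ _
      _ ≤ ‖u k‖ := norm_snd_le _
      _ ≤ c := hc k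
  obtain ⟨A, -, φ, hφ, hA⟩ := tendsto_subseq_of_bounded Metric.isBounded_closedBall hB
  have hup' := hup.comp hφ.tendsto_atTop
  have hAe : ∀ s i, Filter.Tendsto (fun k => B (φ k) s i) Filter.atTop (nhds (A s i)) := by
    intro s i
    exact tendsto_pi_nhds.1 (tendsto_pi_nhds.1 hA s) i
  refine ⟨A, fun i j => ?_, fun i => ?_⟩
  · have t1 : Filter.Tendsto (fun k => ∑ s, star (B (φ k) s (Sum.inl i)) * B (φ k) s (Sum.inr j))
        Filter.atTop (nhds (∑ s, star (A s (Sum.inl i)) * A s (Sum.inr j))) :=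
      tendsto_finsetSum _ fun s _ => ((hAe s _).star).mul (hAe s _)
    have t2 : Filter.Tendsto (fun k => (u (φ k)).1 (i, j)) Filter.atTop (nhds (p.1 (i, j))) :=
      ((continuous_apply (i, j)).comp continuous_fst).continuousAt.tendsto.comp hup'
    simp only [h1] at t1
    exact tendsto_nhds_unique t1 t2
  · have t1 : Filter.Tendsto (fun k => ∑ s, ‖B (φ k) s i‖ ^ 2)
        Filter.atTop (nhds (∑ s, ‖A s i‖ ^ 2)) :=
      tendsto_finsetSum _ fun s _ => ((hAe s _).norm).pow 2
    have t2 : Filter.Tendsto (fun k => ((u (φ k)).2 i).re) Filter.atTop (nhds ((p.2 i).re)) :=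
      (Complex.continuous_re.tendsto _).comp
        (((continuous_apply i).comp continuous_snd).continuousAt.tendsto.comp hup')
    exact le_of_tendsto_of_tendsto' t1 t2 fun k => h2 _ _

lemma schurCone_sep {m n : ℕ} (X : Matrix (Fin m) (Fin n) ℂ)
    (hX : ((fun q => X q.1 q.2, fun _ => 1) : (Fin m × Fin n → ℂ) × (Fin m ⊕ Fin n → ℂ))
      ∉ schurCone m n) :
    ∃ (C : Fin m → Fin n → ℂ) (a : Fin m → ℝ) (b : Fin n → ℝ),
      (∀ i, 0 ≤ a i) ∧ (∀ j, 0 ≤ b j) ∧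
      (∀ (x : Fin m → ℂ) (y : Fin n → ℂ), 0 ≤ (∑ i, ∑ j, C i j * (star (x i) * y j)).re
        + ∑ i, a i * ‖x i‖ ^ 2 + ∑ j, b j * ‖y j‖ ^ 2) ∧
      (∑ i, ∑ j, C i j * X i j).re + ∑ i, a i + ∑ j, b j < 0 := by
  obtain ⟨f, u, hfX, hf⟩ := RCLike.geometric_hahn_banach_point_closed (𝕜 := ℂ)
    (schurCone_convex m n) (schurCone_closed m n) hX
  have h0 : (0 : (Fin m × Fin n → ℂ) × (Fin m ⊕ Fin n → ℂ)) ∈ schurCone m n :=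
    ⟨0, by simp, by simp⟩
  have hu : u < 0 := by simpa using hf _ h0
  have hpos : ∀ p ∈ schurCone m n, 0 ≤ (f p).re := by
    intro p hp
    by_contra hneg
    push Not at hneg
    have h := hf _ (schurCone_smul hp (u / (f p).re) (div_nonneg_of_nonpos hu.le hneg.le))
    have e : f ((u / (f p).re) • p) = ((u / (f p).re : ℝ) : ℂ) * f p := by
      rw [← smul_eq_mul, ← map_smul]
      congr 1
    rw [e] at h
    simp only [RCLike.re_to_complex, Complex.re_ofReal_mul] at h
    rw [div_mul_cancel₀ _ hneg.ne] at h
    exact lt_irrefl _ h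
  let g1 : (Fin m × Fin n → ℂ) →ₗ[ℂ] ℂ := f.toLinearMap ∘ₗ LinearMap.inl ℂ _ _
  let g2 : (Fin m ⊕ Fin n → ℂ) →ₗ[ℂ] ℂ := f.toLinearMap ∘ₗ LinearMap.inr ℂ _ _
  let C : Fin m → Fin n → ℂ := fun i j => g1 (fun q => if (i, j) = q then 1 else 0)
  let d : Fin m ⊕ Fin n → ℂ := fun i => g2 (fun q => if i = q then 1 else 0)
  have hexp : ∀ (Y : Fin m × Fin n → ℂ) (w : Fin m ⊕ Fin n → ℝ),
      (f (Y, fun i => (w i : ℂ))).re = (∑ i, ∑ j, C i j * Y (i, j)).re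
        + ∑ i, (d (Sum.inl i)).re * w (Sum.inl i) + ∑ j, (d (Sum.inr j)).re * w (Sum.inr j) := by
    intro Y w
    have e0 : f (Y, fun i => (w i : ℂ)) = g1 Y + g2 (fun i => (w i : ℂ)) := by
      simp only [g1, g2, LinearMap.comp_apply, ← map_add]
      simp
    rw [e0, LinearMap.pi_apply_eq_sum_univ g1, LinearMap.pi_apply_eq_sum_univ g2,
      Fintype.sum_prod_type, Fintype.sum_sum_type, Complex.add_re, Complex.add_re, add_assoc]
    simp only [smul_eq_mul, Complex.re_sum, Complex.re_ofReal_mul]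
    simp only [C, d, mul_comm]
  have hd : ∀ i, 0 ≤ (d i).re := by
    intro i
    have := hpos (0, fun q => if i = q then 1 else 0) ⟨0, by simp, fun q => by
      by_cases h : i = q <;> simp [h]⟩
    exact this
  refine ⟨C, fun i => (d (Sum.inl i)).re, fun j => (d (Sum.inr j)).re, fun i => hd _,
    fun j => hd _, fun x y => ?_, ?_⟩
  · by_cases hne : Nonempty (Fin m ⊕ Fin n)
    · obtain ⟨k0⟩ := hne
      have := hpos (fun q => star (x q.1) * y q.2,
          fun i => ((‖Sum.elim x y i‖ ^ 2 : ℝ) : ℂ))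
        ⟨fun k i => if k = k0 then Sum.elim x y i else 0, fun i j => ?_, fun i => ?_⟩
      · rw [hexp _ (fun i => ‖Sum.elim x y i‖ ^ 2)] at this
        simpa using this
      · rw [Finset.sum_eq_single k0] <;> simp +contextual
      · rw [Finset.sum_eq_single k0] <;> simp +contextual [-Complex.ofReal_pow]
    · have e1 : IsEmpty (Fin m) := ⟨fun i => hne ⟨Sum.inl i⟩⟩
      have e2 : IsEmpty (Fin n) := ⟨fun i => hne ⟨Sum.inr i⟩⟩
      simp
  · have := hexp (fun q => X q.1 q.2) (fun _ => 1)
    simp only [Complex.ofReal_one, mul_one] at this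
    rw [← this]
    exact (lt_trans hfX hu)

lemma mem_schurCone {m n : ℕ} (X : Matrix (Fin m) (Fin n) ℂ)
    (h : ∀ A : Matrix (Fin m) (Fin n) ℂ, opNorm A ≤ 1 → opNorm (Matrix.hadamard X A) ≤ 1) :
    ((fun q => X q.1 q.2, fun _ => 1) : (Fin m × Fin n → ℂ) × (Fin m ⊕ Fin n → ℂ))
      ∈ schurCone m n := by
  by_contra hX
  obtain ⟨C, a₀, b₀, ha₀, hb₀, hC₀, hlt₀⟩ := schurCone_sep X hX
  -- perturb to get strictly positive weights
  obtain ⟨a, b, ha, hb, hC, hlt⟩ : ∃ (a : Fin m → ℝ) (b : Fin n → ℝ),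
      (∀ i, 0 < a i) ∧ (∀ j, 0 < b j) ∧
      (∀ (x : Fin m → ℂ) (y : Fin n → ℂ), 0 ≤ (∑ i, ∑ j, C i j * (star (x i) * y j)).re
        + ∑ i, a i * ‖x i‖ ^ 2 + ∑ j, b j * ‖y j‖ ^ 2) ∧
      (∑ i, ∑ j, C i j * X i j).re + ∑ i, a i + ∑ j, b j < 0 := by
    obtain ⟨ε, hε, hε2⟩ : ∃ ε : ℝ, 0 < ε ∧ (∑ i, ∑ j, C i j * X i j).re + ∑ i, a₀ i + ∑ j, b₀ j
        + (m + n) * ε < 0 := by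
      set δ := (∑ i, ∑ j, C i j * X i j).re + ∑ i, a₀ i + ∑ j, b₀ j
      have hmn : (0 : ℝ) < m + n + 1 := by positivity
      refine ⟨-δ / (m + n + 1), div_pos (by linarith) hmn, ?_⟩
      have : δ + (m + n) * (-δ / (m + n + 1)) = δ / (m + n + 1) := by field_simp; ring
      rw [this]
      exact div_neg_of_neg_of_pos hlt₀ hmn
    refine ⟨fun i => a₀ i + ε, fun j => b₀ j + ε, fun i => by linarith [ha₀ i],
      fun j => by linarith [hb₀ j], fun x y => ?_, ?_⟩
    · have h1 : ∑ i, a₀ i * ‖x i‖ ^ 2 ≤ ∑ i, (a₀ i + ε) * ‖x i‖ ^ 2 := by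
        gcongr with i; linarith
      have h2 : ∑ i, b₀ i * ‖y i‖ ^ 2 ≤ ∑ i, (b₀ i + ε) * ‖y i‖ ^ 2 := by
        gcongr with i; linarith
      linarith [hC₀ x y]
    · simp only [Finset.sum_add_distrib, Finset.sum_const, Finset.card_univ, Fintype.card_fin,
        nsmul_eq_mul]
      linarith
  have hsa : ∀ i, ((Real.sqrt (a i) : ℝ) : ℂ) ≠ 0 := fun i => by
    exact_mod_cast (Real.sqrt_pos.2 (ha i)).ne'
  have hsb : ∀ i, ((Real.sqrt (b i) : ℝ) : ℂ) ≠ 0 := fun i => by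
    exact_mod_cast (Real.sqrt_pos.2 (hb i)).ne'
  let A : Matrix (Fin m) (Fin n) ℂ := fun i j => C i j / (2 * Real.sqrt (a i) * Real.sqrt (b j))
  have hCA : ∀ i j, C i j = 2 * A i j * Real.sqrt (a i) * Real.sqrt (b j) := by
    intro i j
    have := hsa i
    have := hsb j
    simp only [A]
    field_simp
  have hA : opNorm A ≤ 1 := by
    refine opNorm_le_iff' _ _ zero_le_one fun v => ?_
    set w : Fin m → ℂ := fun i => ∑ j, A i j * v j with hw
    have := hC (fun i => -w i / Real.sqrt (a i)) (fun j => v j / Real.sqrt (b j))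
    have e1 : ∑ i, ∑ j, C i j * (star (-w i / Real.sqrt (a i)) * (v j / Real.sqrt (b j)))
        = ((- 2 * ∑ i, ‖w i‖ ^ 2 : ℝ) : ℂ) := by
      push_cast
      rw [Finset.mul_sum]
      refine Finset.sum_congr rfl fun i _ => ?_
      rw [← Complex.conj_mul']
      have hwi : -2 * ((starRingEnd ℂ) (w i) * w i)
          = -2 * ((starRingEnd ℂ) (w i) * ∑ j, A i j * v j) := rfl
      rw [hwi, Finset.mul_sum, Finset.mul_sum]
      refine Finset.sum_congr rfl fun j _ => ?_
      rw [hCA]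
      have := hsa i
      have := hsb j
      simp only [star_div₀, star_neg, Complex.star_def, Complex.conj_ofReal]
      field_simp
    have e2 : ∀ i, a i * ‖-w i / (Real.sqrt (a i) : ℂ)‖ ^ 2 = ‖w i‖ ^ 2 := by
      intro i
      have := (ha i).ne'
      rw [norm_div, norm_neg, Complex.norm_real, div_pow, Real.norm_eq_abs, sq_abs,
        Real.sq_sqrt (ha i).le]
      field_simp
    have e3 : ∀ i, b i * ‖v i / (Real.sqrt (b i) : ℂ)‖ ^ 2 = ‖v i‖ ^ 2 := by
      intro i
      have := (hb i).ne'
      rw [norm_div, Complex.norm_real, div_pow, Real.norm_eq_abs, sq_abs,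
        Real.sq_sqrt (hb i).le]
      field_simp
    rw [e1, Complex.ofReal_re] at this
    simp only [e2, e3] at this
    linarith
  have hXA := opNorm_apply_le (Matrix.hadamard X A) (fun j => (Real.sqrt (b j) : ℂ))
  have hXA1 : ∑ i, ‖∑ j, (Matrix.hadamard X A) i j * (Real.sqrt (b j) : ℂ)‖ ^ 2 ≤ ∑ j, b j := by
    refine hXA.trans ?_
    have e : ∀ j, ‖(Real.sqrt (b j) : ℂ)‖ ^ 2 = b j := fun j => by
      rw [Complex.norm_real, Real.norm_eq_abs, sq_abs, Real.sq_sqrt (hb j).le]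
    simp only [e]
    exact mul_le_of_le_one_left (Finset.sum_nonneg fun j _ => (hb j).le)
      (pow_le_one₀ (opNorm_nonneg' _) (h A hA))
  have hsum : ∑ i, ∑ j, C i j * X i j = 2 * ∑ i, (Real.sqrt (a i) : ℂ) *
      ∑ j, (Matrix.hadamard X A) i j * (Real.sqrt (b j) : ℂ) := by
    rw [Finset.mul_sum]
    refine Finset.sum_congr rfl fun i _ => ?_
    rw [Finset.mul_sum, Finset.mul_sum]
    refine Finset.sum_congr rfl fun j _ => ?_
    rw [hCA, Matrix.hadamard_apply]
    ring
  have hterm : ∀ i, -(a i + ‖∑ j, (Matrix.hadamard X A) i j * (Real.sqrt (b j) : ℂ)‖ ^ 2) ≤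
      2 * ((Real.sqrt (a i) : ℂ) * ∑ j, (Matrix.hadamard X A) i j * (Real.sqrt (b j) : ℂ)).re := by
    intro i
    set z := ∑ j, (Matrix.hadamard X A) i j * (Real.sqrt (b j) : ℂ)
    rw [Complex.re_ofReal_mul]
    have h1 : -‖z‖ ≤ z.re := (abs_le.1 (Complex.abs_re_le_norm z)).1
    have h2 := Real.sq_sqrt (ha i).le
    nlinarith [sq_nonneg (Real.sqrt (a i) - ‖z‖), Real.sqrt_nonneg (a i),
      mul_le_mul_of_nonneg_left h1 (Real.sqrt_nonneg (a i))]
  have hfin := Finset.sum_le_sum fun i (_ : i ∈ Finset.univ) => hterm i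
  rw [Finset.sum_neg_distrib, Finset.sum_add_distrib, ← Finset.mul_sum, ← Complex.re_sum] at hfin
  have hre : (∑ i, ∑ j, C i j * X i j).re = 2 * (∑ i, (Real.sqrt (a i) : ℂ) *
      ∑ j, (Matrix.hadamard X A) i j * (Real.sqrt (b j) : ℂ)).re := by
    rw [hsum]; simp
  linarith

/-- `‖S_X‖ ≤ 1` iff `X = Lᴴ R` with column norms of `L` and `R` at most `1`, where the
inner dimension can be taken to be `min m n`. -/
theorem schurNorm_le_one_iff_exists_factorization
    (m n : ℕ) (X : Matrix (Fin m) (Fin n) ℂ) :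
    schurNorm X ≤ 1 ↔
      ∃ (L : Matrix (Fin (min m n)) (Fin m) ℂ) (R : Matrix (Fin (min m n)) (Fin n) ℂ),
        colNorm L ≤ 1 ∧ colNorm R ≤ 1 ∧ X = Lᴴ * R := by
  constructor
  · intro h
    have hm := mem_schurCone X fun A hA =>
      (le_ciSup (schurNorm_bdd X) ⟨A, hA⟩).trans h
    obtain ⟨B, h1, h2⟩ := hm
    obtain ⟨L, R, hL, hR, he⟩ := factor_min
      (fun i : Fin m => (WithLp.toLp 2 fun k => B k (Sum.inl i) :
        EuclideanSpace ℂ (Fin m ⊕ Fin n)))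
      (fun j : Fin n => (WithLp.toLp 2 fun k => B k (Sum.inr j) :
        EuclideanSpace ℂ (Fin m ⊕ Fin n)))
      (fun i => by simpa [EuclideanSpace.norm_sq_eq] using h2 (Sum.inl i))
      (fun j => by simpa [EuclideanSpace.norm_sq_eq] using h2 (Sum.inr j))
    refine ⟨L, R, (colNorm_le_one_iff L).2 hL, (colNorm_le_one_iff R).2 hR, ?_⟩
    rw [← he]
    ext i j
    rw [Matrix.of_apply, PiLp.inner_apply]
    refine (h1 i j).symm.trans ?_
    refine Finset.sum_congr rfl fun k _ => ?_
    simp [mul_comm]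
  · rintro ⟨L, R, hL, hR, rfl⟩
    refine Real.iSup_le (fun A => ?_) zero_le_one
    have := hadamard_opNorm_le L R A.1 1 zero_le_one ((colNorm_le_one_iff L).1 hL)
      (by simpa using (colNorm_le_one_iff R).1 hR)
    linarith [A.2]
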